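/- Assume γ is non-oscillating at O, let m, β be as in the Kurdyka–Mostowski–Parusiński expansion along γ and ν the limit of secants, and assume in addition that |x|^{2−m}·‖Hs(f)(x)‖ converges to a positive finite limit as x → O along γ. Then the rescaled Hessian (m(m−1)·|x|^{m−2})^{−1}·Hs(f)(x) converges as x → O along γ to a nonzero self-adjoint operator 𝓗₀, and the eigen-value of 𝓗₀ in the direction ν is exactly −β: 𝓗₀·ν = −β·ν. -/

import Mathlib

open scoped RealInnerProductSpace Topology
open Filter

lemma aux_sign {L : ℝ} (v : ℝ → ℝ) (hc : ∀ᶠ s in 𝓝[<] L, ContinuousAt v s)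
    (h0 : ∀ᶠ s in 𝓝[<] L, v s ≠ 0) :
    (∀ᶠ s in 𝓝[<] L, v s < 0) ∨ (∀ᶠ s in 𝓝[<] L, 0 < v s) := by
  obtain ⟨a, ha, hs⟩ := mem_nhdsLT_iff_exists_Ioo_subset.1 (hc.and h0)
  have hmem : Set.Ioo a L ∈ 𝓝[<] L := Ioo_mem_nhdsLT ha
  have hcont : ContinuousOn v (Set.Ioo a L) := fun s h => (hs h).1.continuousWithinAt
  by_contra hcon
  push Not at hcon
  obtain ⟨h1, h2⟩ := hcon
  obtain ⟨s1, hs1, hv1⟩ := (h1.and_eventually hmem).exists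
  obtain ⟨s2, hs2, hv2⟩ := (h2.and_eventually hmem).exists
  obtain ⟨s, hsI, hs0⟩ := isPreconnected_Ioo.intermediate_value hv2 hv1 hcont ⟨hs2, hs1⟩
  exact (hs hsI).2 hs0

lemma aux_conv {L : ℝ} (u : ℝ → ℝ) (B : ℝ) (hb : ∀ᶠ s in 𝓝[<] L, |u s| ≤ B)
    (hd : ∀ t, (∀ᶠ s in 𝓝[<] L, u s ≤ t) ∨ (∀ᶠ s in 𝓝[<] L, t ≤ u s)) :
    ∃ l, Tendsto u (𝓝[<] L) (𝓝 l) := by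
  refine tendsto_of_no_upcrossings (s := Set.univ) dense_univ ?_ ?_ ?_
  · rintro a - b - hab ⟨h1, h2⟩
    rcases hd b with h | h
    · obtain ⟨s, hs⟩ := (h2.and_eventually h).exists
      exact absurd hs.1 (not_lt.2 hs.2)
    · obtain ⟨s, hs⟩ := (h1.and_eventually h).exists
      linarith [hs.1, hs.2]
  · exact isBoundedUnder_of_eventually_le (a := B) (hb.mono fun s h => (abs_le.1 h).2)
  · exact isBoundedUnder_of_eventually_ge (a := -B) (hb.mono fun s h => (abs_le.1 h).1)

/-- ratio convergence from sign-constancy -/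
lemma aux_ratio {L : ℝ} (h w D : ℝ → ℝ) (N : ℕ) (hN0 : N ≠ 0) (hN : Even N)
    (hw : ∀ᶠ s in 𝓝[<] L, 0 < w s) (hD : ∀ᶠ s in 𝓝[<] L, w s ^ N = D s)
    (B : ℝ) (hB : ∀ᶠ s in 𝓝[<] L, |h s| ≤ B * w s)
    (hs : (∀ᶠ s in 𝓝[<] L, h s ≤ 0) ∨ (∀ᶠ s in 𝓝[<] L, 0 ≤ h s))
    (hd : ∀ t : ℝ, (∀ᶠ s in 𝓝[<] L, h s ^ N - t * D s ≤ 0) ∨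
      (∀ᶠ s in 𝓝[<] L, 0 ≤ h s ^ N - t * D s)) :
    ∃ l, Tendsto (fun s => h s / w s) (𝓝[<] L) (𝓝 l) := by
  have key : ∃ l, Tendsto (fun s => |h s| / w s) (𝓝[<] L) (𝓝 l) := by
    refine aux_conv _ B ?_ ?_
    · filter_upwards [hw, hB] with s h1 h2
      rw [abs_of_nonneg (by positivity), div_le_iff₀ h1]; exact h2
    · intro t
      rcases lt_or_ge t 0 with ht | ht
      · right
        filter_upwards [hw] with s h1
        exact ht.le.trans (by positivity)
      · refine (hd (t ^ N)).imp (fun H => ?_) (fun H => ?_)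
        · filter_upwards [hw, hD, H] with s h1 h2 h3
          rw [div_le_iff₀ h1]
          rw [← h2, ← mul_pow, ← hN.pow_abs] at h3
          exact (pow_le_pow_iff_left₀ (abs_nonneg _) (by positivity) hN0).1 (by linarith)
        · filter_upwards [hw, hD, H] with s h1 h2 h3
          rw [le_div_iff₀ h1]
          rw [← h2, ← mul_pow, ← hN.pow_abs (h s)] at h3
          exact (pow_le_pow_iff_left₀ (by positivity) (abs_nonneg _) hN0).1 (by linarith)
  obtain ⟨l, hl⟩ := key
  rcases hs with hs | hs
  · refine ⟨-l, hl.neg.congr' ?_⟩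
    filter_upwards [hs] with s h1
    rw [abs_of_nonpos h1]; ring
  · refine ⟨l, hl.congr' ?_⟩
    filter_upwards [hs] with s h1
    rw [abs_of_nonneg h1]

section
variable {n : ℕ}

lemma aux_grad_inner (f : EuclideanSpace ℝ (Fin n) → ℝ) (x v : EuclideanSpace ℝ (Fin n)) : ⟪gradient f x, v⟫ = fderiv ℝ f x v := by
  simp [gradient]

lemma aux_grad_an (f : EuclideanSpace ℝ (Fin n) → ℝ) (x : EuclideanSpace ℝ (Fin n)) (hf : AnalyticAt ℝ f x) :
    AnalyticAt ℝ (gradient f) x := by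
  have : gradient f = fun y => ∑ i : Fin n,
      (fderiv ℝ f y (EuclideanSpace.basisFun (Fin n) ℝ i)) • EuclideanSpace.basisFun (Fin n) ℝ i := by
    funext y
    rw [← (EuclideanSpace.basisFun (Fin n) ℝ).sum_repr' (gradient f y)]
    refine Finset.sum_congr rfl fun i _ => ?_
    rw [real_inner_comm, aux_grad_inner]
  rw [this]
  refine Finset.analyticAt_fun_sum _ fun i _ => ?_
  have h1 := hf.fderiv
  exact AnalyticAt.smul (((ContinuousLinearMap.apply ℝ ℝ
    (EuclideanSpace.basisFun (Fin n) ℝ i)).analyticAt _).comp h1) analyticAt_const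

lemma aux_symm (f : EuclideanSpace ℝ (Fin n) → ℝ) (x : EuclideanSpace ℝ (Fin n)) (hf : AnalyticAt ℝ f x) (u v : EuclideanSpace ℝ (Fin n)) :
    ⟪fderiv ℝ (gradient f) x u, v⟫ = ⟪u, fderiv ℝ (gradient f) x v⟫ := by
  have hs : IsSymmSndFDerivAt ℝ f x := by
    refine (hf.contDiffAt (n := 2)).isSymmSndFDerivAt ?_
    simp
  have hd : DifferentiableAt ℝ (gradient f) x := (aux_grad_an f x hf).differentiableAt
  have hd2 : DifferentiableAt ℝ (fderiv ℝ f) x := hf.fderiv.differentiableAt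
  have key : ∀ u v : EuclideanSpace ℝ (Fin n), ⟪fderiv ℝ (gradient f) x u, v⟫ = fderiv ℝ (fderiv ℝ f) x u v := by
    intro u v
    have e1 : HasFDerivAt (fun y => ⟪gradient f y, v⟫) _ x :=
      hd.hasFDerivAt.inner ℝ (hasFDerivAt_const v x)
    have e2 : HasFDerivAt (fun y => fderiv ℝ f y v) _ x :=
      hd2.hasFDerivAt.clm_apply (hasFDerivAt_const v x)
    simp only [aux_grad_inner] at e1
    have := congrArg (fun A => A u) (e1.unique e2)
    simpa using this
  rw [key, real_inner_comm, key]
  exact hs u v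

lemma aux_app {l : Filter ℝ} {A : ℝ → (EuclideanSpace ℝ (Fin n) →L[ℝ] EuclideanSpace ℝ (Fin n))}
    {x : ℝ → EuclideanSpace ℝ (Fin n)} {A₀ x₀} (hA : Tendsto A l (𝓝 A₀)) (hx : Tendsto x l (𝓝 x₀)) :
    Tendsto (fun s => A s (x s)) l (𝓝 (A₀ x₀)) :=
  (isBoundedBilinearMap_apply.continuous.tendsto (A₀, x₀)).comp (hA.prodMk_nhds hx)

lemma aux_om {F : Type*} [NormedAddCommGroup F] [NormedSpace ℝ F] [CompleteSpace F]
    (g : EuclideanSpace ℝ (Fin n) → F) (x : EuclideanSpace ℝ (Fin n)) :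
    AnalyticAt ℝ g x ↔ ContDiffAt ℝ ⊤ g x := by
  rw [← analyticWithinAt_univ, ← contDiffWithinAt_univ]
  exact contDiffWithinAt_omega_iff_analyticWithinAt.symm

/-- converging entries give converging operators -/
lemma aux_op {l : Filter ℝ} (A : ℝ → (EuclideanSpace ℝ (Fin n) →L[ℝ] EuclideanSpace ℝ (Fin n)))
    (h : ∀ i j : Fin n, ∃ a, Tendsto (fun s => ⟪A s (EuclideanSpace.basisFun (Fin n) ℝ i),
      EuclideanSpace.basisFun (Fin n) ℝ j⟫) l (𝓝 a)) : ∃ A₀, Tendsto A l (𝓝 A₀) := by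
  choose a ha using h
  let b := EuclideanSpace.basisFun (Fin n) ℝ
  have e : ∀ T : EuclideanSpace ℝ (Fin n) →L[ℝ] EuclideanSpace ℝ (Fin n), T = ∑ i : Fin n, ∑ j : Fin n,
      ⟪T (b i), b j⟫ • (innerSL ℝ (b i)).smulRight (b j) := by
    intro T
    ext1 x
    conv_lhs => rw [← b.sum_repr' x, map_sum]
    simp only [sum_apply, map_smul]
    refine Finset.sum_congr rfl fun i _ => ?_
    conv_lhs => rw [← b.sum_repr' (T (b i)), Finset.smul_sum]
    refine Finset.sum_congr rfl fun j _ => ?_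
    simp [smul_smul, mul_comm, real_inner_comm]
  refine ⟨∑ i : Fin n, ∑ j : Fin n, a i j • (innerSL ℝ (b i)).smulRight (b j), ?_⟩
  rw [show A = fun s => A s from rfl, funext fun s => e (A s)]
  exact tendsto_finsetSum _ fun i _ => tendsto_finsetSum _ fun j _ => (ha i j).smul_const _

lemma aux_vec {l : Filter ℝ} (A : ℝ → EuclideanSpace ℝ (Fin n))
    (h : ∀ i : Fin n, ∃ a, Tendsto (fun s => ⟪A s, EuclideanSpace.basisFun (Fin n) ℝ i⟫) l (𝓝 a)) :
    ∃ A₀, Tendsto A l (𝓝 A₀) := by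
  choose a ha using h
  let b := EuclideanSpace.basisFun (Fin n) ℝ
  refine ⟨∑ i : Fin n, a i • b i, ?_⟩
  have : A = fun s => ∑ i : Fin n, ⟪A s, b i⟫ • b i := by
    funext s
    conv_lhs => rw [← b.sum_repr' (A s)]
    simp only [real_inner_comm]
  rw [this]
  exact tendsto_finsetSum _ fun i _ => (ha i).smul_const _

/-- vector form of the Hopital rule -/
lemma aux_lhop {L p : ℝ} (hp : 0 < p) (F F' : ℝ → EuclideanSpace ℝ (Fin n)) (w : EuclideanSpace ℝ (Fin n))
    (hF : ∀ᶠ s in 𝓝[<] L, HasDerivAt F (F' s) s) (hF0 : Tendsto F (𝓝[<] L) (𝓝 0))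
    (hlim : Tendsto (fun s => ((L - s) ^ (p - 1))⁻¹ • F' s) (𝓝[<] L) (𝓝 w)) :
    Tendsto (fun s => ((L - s) ^ p)⁻¹ • F s) (𝓝[<] L) (𝓝 (-p⁻¹ • w)) := by
  have hlt : ∀ᶠ s in 𝓝[<] L, s < L := self_mem_nhdsWithin
  have sc : ∀ v : EuclideanSpace ℝ (Fin n), Tendsto (fun s => ⟪((L - s) ^ p)⁻¹ • F s, v⟫) (𝓝[<] L) (𝓝 ⟪-p⁻¹ • w, v⟫) := by
    intro v
    have := HasDerivAt.lhopital_zero_nhdsLT (a := L) (f := fun s => ⟪F s, v⟫)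
      (f' := fun s => ⟪F' s, v⟫) (g := fun s => (L - s) ^ p)
      (g' := fun s => -(p * (L - s) ^ (p - 1))) (l := 𝓝 ⟪-p⁻¹ • w, v⟫) ?_ ?_ ?_ ?_ ?_ ?_
    · refine this.congr fun s => ?_
      rw [real_inner_smul_left]; ring
    · filter_upwards [hF] with s h
      simpa using h.inner ℝ (hasDerivAt_const s v)
    · filter_upwards [hlt] with s h
      have h1 : HasDerivAt (fun s => L - s) (-1) s := by
        simpa using (hasDerivAt_id s).const_sub L
      have := h1.rpow_const (p := p) (Or.inl (by linarith : L - s ≠ 0))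
      convert this using 1; ring
    · filter_upwards [hlt] with s h
      have : 0 < (L - s) ^ (p - 1) := Real.rpow_pos_of_pos (by linarith) _
      have := mul_pos hp this
      linarith
    · simpa using hF0.inner (tendsto_const_nhds (x := v))
    · have : ContinuousAt (fun s : ℝ => (L - s) ^ p) L :=
        ContinuousAt.rpow_const (by fun_prop) (Or.inr hp.le)
      have h2 := this.tendsto.mono_left (nhdsWithin_le_nhds (s := Set.Iio L))
      simpa [Real.zero_rpow hp.ne'] using h2
    · have h2 := (hlim.inner (tendsto_const_nhds (x := v))).const_mul (-p⁻¹)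
      rw [real_inner_smul_left]
      refine h2.congr fun s => ?_
      rw [real_inner_smul_left, div_eq_mul_inv, inv_neg, mul_inv]; ring
  have hA : ∀ v : EuclideanSpace ℝ (Fin n), v = ∑ i, ⟪v, EuclideanSpace.basisFun (Fin n) ℝ i⟫ • EuclideanSpace.basisFun (Fin n) ℝ i := by
    intro v
    conv_lhs => rw [← (EuclideanSpace.basisFun (Fin n) ℝ).sum_repr' v]
    simp only [real_inner_comm]
  rw [hA (-p⁻¹ • w), funext fun s => hA (((L - s) ^ p)⁻¹ • F s)]
  exact tendsto_finsetSum _ fun i _ => (sc _).smul_const _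
end

/-- if moreover `|x|^{2-m}‖Hs(f)(x)‖` converges to a positive limit along the
trajectory, then `(m(m-1)|x|^{m-2})⁻¹·Hs(f)(x)` converges to a nonzero self-adjoint operator
`𝓗₀` with `𝓗₀·ν = -β·ν`. -/
theorem rescaled_hessian_limit_eigenvalue_neg_beta
    {n : ℕ} (hn : 2 ≤ n)
    (U : Set (EuclideanSpace ℝ (Fin n))) (hUopen : IsOpen U)
    (hOU : (0 : EuclideanSpace ℝ (Fin n)) ∈ U)
    (f : EuclideanSpace ℝ (Fin n) → ℝ)
    (hfan : AnalyticOnNhd ℝ f U) (hf0 : f 0 = 0) (hgf0 : gradient f 0 = 0)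
    (L : ℝ) (hL : 0 < L)
    (γ : ℝ → EuclideanSpace ℝ (Fin n))
    (hγU : ∀ s ∈ Set.Ico (0 : ℝ) L, γ s ∈ U)
    (hγreg : ∀ s ∈ Set.Ico (0 : ℝ) L, gradient f (γ s) ≠ 0)
    (hγode : ∀ s ∈ Set.Ico (0 : ℝ) L,
      HasDerivAt γ (‖gradient f (γ s)‖⁻¹ • gradient f (γ s)) s)
    (hfneg : f (γ 0) < 0)
    (hfmono : StrictMonoOn (fun s => f (γ s)) (Set.Ico (0 : ℝ) L))
    (hγlim : Tendsto γ (𝓝[<] L) (𝓝 0))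
    (hosc : ∀ g : EuclideanSpace ℝ (Fin n) → ℝ, AnalyticAt ℝ g 0 →
      (∀ᶠ s in 𝓝[<] L, g (γ s) = 0) ∨ (∀ᶠ s in 𝓝[<] L, g (γ s) ≠ 0))
    (ν : EuclideanSpace ℝ (Fin n)) (hν1 : ‖ν‖ = 1)
    (hνlim : Tendsto (fun s => ‖γ s‖⁻¹ • γ s) (𝓝[<] L) (𝓝 ν))
    (m : ℝ) (hm : 1 < m) (hmQ : ∃ q : ℚ, m = (q : ℝ)) (β : ℝ) (hβ : 0 < β)
    (hKMP1 : (fun s => f (γ s) + β * ‖γ s‖ ^ m) =o[𝓝[<] L] fun s => ‖γ s‖ ^ m)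
    (hKMP2 : (fun s => ⟪gradient f (γ s), ‖γ s‖⁻¹ • γ s⟫ + m * β * ‖γ s‖ ^ (m - 1))
      =o[𝓝[<] L] fun s => ‖γ s‖ ^ (m - 1))
    (c : ℝ) (hc : 0 < c)
    (hconv : Tendsto (fun s => ‖γ s‖ ^ ((2 : ℝ) - m) * ‖fderiv ℝ (gradient f) (γ s)‖)
      (𝓝[<] L) (𝓝 c)) :
    ∃ H₀ : EuclideanSpace ℝ (Fin n) →L[ℝ] EuclideanSpace ℝ (Fin n),
      H₀ ≠ 0 ∧ (∀ u v : EuclideanSpace ℝ (Fin n), ⟪H₀ u, v⟫ = ⟪u, H₀ v⟫) ∧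
      Tendsto (fun s => (m * (m - 1) * ‖γ s‖ ^ (m - 2))⁻¹ • fderiv ℝ (gradient f) (γ s))
        (𝓝[<] L) (𝓝 H₀) ∧
      H₀ ν = (-β) • ν := by
  have evI : ∀ᶠ s in 𝓝[<] L, s ∈ Set.Ico (0 : ℝ) L := Ico_mem_nhdsLT hL
  have hGan : ∀ x ∈ U, AnalyticAt ℝ (gradient f) x := fun x hx => aux_grad_an f x (hfan x hx)
  have hG0 := hGan 0 hOU
  have hH0 : AnalyticAt ℝ (fderiv ℝ (gradient f)) 0 := hG0.fderiv
  have hsgn : ∀ g : EuclideanSpace ℝ (Fin n) → ℝ, AnalyticAt ℝ g 0 →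
      (∀ᶠ s in 𝓝[<] L, g (γ s) ≤ 0) ∨ (∀ᶠ s in 𝓝[<] L, 0 ≤ g (γ s)) := by
    intro g hg
    rcases hosc g hg with h | h
    · exact Or.inl (h.mono fun s hs => hs.le)
    · have hc : ∀ᶠ s in 𝓝[<] L, ContinuousAt (fun s => g (γ s)) s := by
        filter_upwards [hγlim.eventually hg.eventually_analyticAt, evI] with s h1 h2
        exact ContinuousAt.comp h1.continuousAt (hγode s h2).continuousAt
      exact (aux_sign _ hc h).imp (fun h => h.mono fun s hs => hs.le)
        (fun h => h.mono fun s hs => hs.le)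
  have hne : ∀ᶠ s in 𝓝[<] L, γ s ≠ 0 := by
    have hν0 : ν ≠ 0 := by
      rintro rfl
      simp at hν1
    filter_upwards [hνlim.eventually_ne hν0] with s hs h0
    simp [h0] at hs
  have hnpos : ∀ᶠ s in 𝓝[<] L, 0 < ‖γ s‖ := hne.mono fun s hs => norm_pos_iff.2 hs
  have hLs : ∀ᶠ s in 𝓝[<] L, 0 < L - s := evI.mono fun s hs => sub_pos.2 hs.2
  have hnlim : Tendsto (fun s => ‖γ s‖) (𝓝[<] L) (𝓝 0) := by simpa using hγlim.norm
  -- step 1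
  have hinner : ∀ (F : EuclideanSpace ℝ (Fin n) → EuclideanSpace ℝ (Fin n))
      (v : EuclideanSpace ℝ (Fin n)), AnalyticAt ℝ F 0 → AnalyticAt ℝ (fun x => ⟪F x, v⟫) 0 := by
    intro F v hF
    rw [aux_om] at hF ⊢
    exact hF.inner ℝ contDiffAt_const
  have hnsq : ∀ F : EuclideanSpace ℝ (Fin n) → EuclideanSpace ℝ (Fin n),
      AnalyticAt ℝ F 0 → AnalyticAt ℝ (fun x => ‖F x‖ ^ 2) 0 := by
    intro F hF
    rw [aux_om] at hF ⊢
    exact hF.norm_sq ℝ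
  obtain ⟨w, hw⟩ : ∃ w, Tendsto (fun s => ‖gradient f (γ s)‖⁻¹ • gradient f (γ s))
      (𝓝[<] L) (𝓝 w) := by
    refine aux_vec _ fun i => ?_
    have hi := hinner _ (EuclideanSpace.basisFun (Fin n) ℝ i) hG0
    obtain ⟨l, hl⟩ := aux_ratio (L := L)
      (fun s => ⟪gradient f (γ s), EuclideanSpace.basisFun (Fin n) ℝ i⟫)
      (fun s => ‖gradient f (γ s)‖) (fun s => ‖gradient f (γ s)‖ ^ 2) 2 two_ne_zero even_two
      (evI.mono fun s hs => norm_pos_iff.2 (hγreg s hs)) (Eventually.of_forall fun s => rfl) 1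
      (Eventually.of_forall fun s => by
        have := abs_real_inner_le_norm (gradient f (γ s)) (EuclideanSpace.basisFun (Fin n) ℝ i)
        rw [OrthonormalBasis.norm_eq_one, mul_one] at this
        rwa [one_mul]) (hsgn _ hi)
      (fun t => hsgn _ ((hi.pow 2).sub (analyticAt_const.mul (hnsq _ hG0))))
    refine ⟨l, hl.congr fun s => ?_⟩
    rw [real_inner_smul_left]; ring
  have hw1 : ‖w‖ = 1 := by
    refine tendsto_nhds_unique hw.norm (tendsto_const_nhds.congr' ?_)
    filter_upwards [evI] with s hs
    rw [norm_smul, norm_inv, norm_norm, inv_mul_cancel₀ (norm_ne_zero_iff.2 (hγreg s hs))]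
  -- step 2
  have hγL : Tendsto (fun s => (L - s)⁻¹ • γ s) (𝓝[<] L) (𝓝 (-w)) := by
    have := aux_lhop (L := L) one_pos γ _ w (evI.mono fun s hs => hγode s hs) hγlim
      (by simpa using hw)
    simpa using this
  have hq : Tendsto (fun s => ‖γ s‖ / (L - s)) (𝓝[<] L) (𝓝 1) := by
    have := hγL.norm
    rw [norm_neg, hw1] at this
    refine this.congr' ?_
    filter_upwards [hLs] with s hs
    rw [norm_smul, Real.norm_of_nonneg (inv_nonneg.2 hs.le)]; ring
  have hwν : w = -ν := by
    have h1 : Tendsto (fun s => (‖γ s‖ / (L - s))⁻¹ • ((L - s)⁻¹ • γ s)) (𝓝[<] L)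
        (𝓝 ((1 : ℝ)⁻¹ • (-w))) := (hq.inv₀ one_ne_zero).smul hγL
    have h2 : ν = (1 : ℝ)⁻¹ • (-w) := by
      refine tendsto_nhds_unique (hνlim.congr' ?_) h1
      filter_upwards [hLs, hnpos] with s h1 h2
      rw [smul_smul]; congr 1; field_simp
    rw [h2]; simp
  -- step 3
  have hqp : ∀ a : ℝ, Tendsto (fun s => ‖γ s‖ ^ a / (L - s) ^ a) (𝓝[<] L) (𝓝 1) := by
    intro a
    have := hq.rpow_const (p := a) (Or.inl one_ne_zero)
    rw [Real.one_rpow] at this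
    refine this.congr' ?_
    filter_upwards [hLs] with s hs
    rw [Real.div_rpow (norm_nonneg _) hs.le]
  -- `2 ≤ m`
  have hm2 : 2 ≤ m := by
    by_contra hlt
    push Not at hlt
    have h1 : Tendsto (fun s => ‖γ s‖ ^ ((2 : ℝ) - m)) (𝓝[<] L) (𝓝 0) := by
      have := hnlim.rpow_const (p := 2 - m) (Or.inr (by linarith))
      rwa [Real.zero_rpow (by linarith)] at this
    have h2 := h1.mul (hH0.continuousAt.tendsto.comp hγlim).norm
    rw [zero_mul] at h2
    exact hc.ne' (tendsto_nhds_unique hconv h2)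
  -- step 4
  obtain ⟨A₀, hA⟩ : ∃ A₀, Tendsto (fun s => (‖γ s‖ ^ (m - 2))⁻¹ • fderiv ℝ (gradient f) (γ s))
      (𝓝[<] L) (𝓝 A₀) := by
    obtain ⟨r, hr⟩ := hmQ
    have hr2 : (0 : ℚ) ≤ r - 2 := by
      have : (2 : ℚ) ≤ r := by exact_mod_cast hr ▸ hm2
      linarith
    obtain ⟨k, hk⟩ := Int.eq_ofNat_of_zero_le (Rat.num_nonneg.2 hr2)
    have hkm : (m - 2) * ((r - 2).den : ℝ) = k := by
      have h1 : (r - 2) * ((r - 2).den : ℚ) = k := by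
        rw [Rat.mul_den_eq_num, hk]; simp
      rw [hr]; exact_mod_cast h1
    refine aux_op _ fun i j => ?_
    have hcol : AnalyticAt ℝ (fun x => fderiv ℝ (gradient f) x
        (EuclideanSpace.basisFun (Fin n) ℝ i)) 0 :=
      ((ContinuousLinearMap.apply ℝ (EuclideanSpace ℝ (Fin n))
        (EuclideanSpace.basisFun (Fin n) ℝ i)).analyticAt _).comp hH0
    have hi := hinner _ (EuclideanSpace.basisFun (Fin n) ℝ j) hcol
    obtain ⟨l, hl⟩ := aux_ratio (L := L)
      (fun s => ⟪fderiv ℝ (gradient f) (γ s) (EuclideanSpace.basisFun (Fin n) ℝ i),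
        EuclideanSpace.basisFun (Fin n) ℝ j⟫)
      (fun s => ‖γ s‖ ^ (m - 2)) (fun s => (‖γ s‖ ^ 2) ^ k) (2 * (r - 2).den)
      (by have := (r - 2).den_nz; omega) (even_two_mul _)
      (hnpos.mono fun s hs => Real.rpow_pos_of_pos hs _)
      (Eventually.of_forall fun s => by
        rw [← Real.rpow_natCast, ← Real.rpow_mul (norm_nonneg _), ← pow_mul, ← Real.rpow_natCast]
        congr 1
        push_cast
        rw [← hkm]; ring) (c + 1)
      (by
        filter_upwards [hconv.eventually_lt_const (lt_add_one c), hnpos] with s h1 h2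
        have h3 := abs_real_inner_le_norm (fderiv ℝ (gradient f) (γ s)
          (EuclideanSpace.basisFun (Fin n) ℝ i)) (EuclideanSpace.basisFun (Fin n) ℝ j)
        rw [OrthonormalBasis.norm_eq_one, mul_one] at h3
        have h4 := (fderiv ℝ (gradient f) (γ s)).le_opNorm (EuclideanSpace.basisFun (Fin n) ℝ i)
        rw [OrthonormalBasis.norm_eq_one, mul_one] at h4
        refine (h3.trans h4).trans ?_
        have h5 : 0 < ‖γ s‖ ^ (m - 2) := Real.rpow_pos_of_pos h2 _
        rw [show (2 : ℝ) - m = -(m - 2) by ring, Real.rpow_neg h2.le, inv_mul_lt_iff₀ h5] at h1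
        linarith)
      (hsgn _ hi)
      (fun t => hsgn _ ((hi.pow _).sub (analyticAt_const.mul ((hnsq _ analyticAt_id).pow k))))
    refine ⟨l, hl.congr fun s => ?_⟩
    rw [smul_apply, real_inner_smul_left]; ring
  -- step 5
  have hz : Tendsto (fun s => ((L - s) ^ (m - 1))⁻¹ • gradient f (γ s)) (𝓝[<] L)
      (𝓝 (-(m - 1)⁻¹ • A₀ w)) := by
    refine aux_lhop (by linarith) (fun s => gradient f (γ s))
      (fun s => fderiv ℝ (gradient f) (γ s) (‖gradient f (γ s)‖⁻¹ • gradient f (γ s))) _ ?_ ?_ ?_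
    · filter_upwards [evI] with s hs
      exact (hGan _ (hγU s hs)).differentiableAt.hasFDerivAt.comp_hasDerivAt s (hγode s hs)
    · have := hG0.continuousAt.tendsto.comp hγlim
      rw [hgf0] at this
      exact this
    · have h1 := (hqp (m - 2)).smul (aux_app hA hw)
      rw [one_smul] at h1
      refine h1.congr' ?_
      filter_upwards [hnpos, hLs] with s h2 h3
      have h5 : 0 < ‖γ s‖ ^ (m - 2) := Real.rpow_pos_of_pos h2 _
      rw [smul_apply, smul_smul, show m - 1 - 1 = m - 2 by ring]
      congr 1
      field_simp
  -- step 6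
  set z := -(m - 1)⁻¹ • A₀ w with hzdef
  have hzw : z = ‖z‖ • w := by
    refine tendsto_nhds_unique (hz.congr' ?_) (hz.norm.smul hw)
    filter_upwards [hLs, evI] with s hs h1
    have h5 : 0 < (L - s) ^ (m - 1) := Real.rpow_pos_of_pos hs _
    have h6 := norm_ne_zero_iff.2 (hγreg s h1)
    rw [norm_smul, norm_inv, Real.norm_of_nonneg h5.le, smul_smul]
    congr 1
    field_simp
  have hzν : ⟪z, ν⟫ = -(m * β) := by
    have h1 := (hqp (m - 1)).mul (hKMP2.tendsto_div_nhds_zero.sub_const (m * β))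
    rw [zero_sub, one_mul] at h1
    refine tendsto_nhds_unique (hz.inner hνlim) (h1.congr' ?_)
    filter_upwards [hnpos, hLs] with s h2 h3
    have h5 : 0 < ‖γ s‖ ^ (m - 1) := Real.rpow_pos_of_pos h2 _
    have h6 : 0 < (L - s) ^ (m - 1) := Real.rpow_pos_of_pos h3 _
    rw [real_inner_smul_left]
    field_simp
    ring
  have hzn : ‖z‖ = m * β := by
    rw [hzw, hwν, real_inner_smul_left, inner_neg_left, real_inner_self_eq_norm_sq, hν1] at hzν
    linarith
  have hAν : A₀ ν = (-(m * (m - 1) * β)) • ν := by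
    have h1 : A₀ ν = (m - 1) • z := by
      rw [hzdef, hwν, map_neg, smul_neg, neg_smul, neg_neg, smul_smul,
        mul_inv_cancel₀ (by linarith), one_smul]
    rw [h1, hzw, hzn, hwν, smul_neg, smul_neg, smul_smul, neg_smul]
    congr 2
    ring
  have hmm : 0 < m * (m - 1) := by nlinarith
  have hT : Tendsto (fun s => (m * (m - 1) * ‖γ s‖ ^ (m - 2))⁻¹ • fderiv ℝ (gradient f) (γ s))
      (𝓝[<] L) (𝓝 ((m * (m - 1))⁻¹ • A₀)) := by
    refine (hA.const_smul (m * (m - 1))⁻¹).congr fun s => ?_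
    rw [smul_smul, mul_inv (m * (m - 1))]
  have hev : ((m * (m - 1))⁻¹ • A₀) ν = (-β) • ν := by
    rw [smul_apply, hAν, smul_smul]
    congr 1
    have hm1 : m - 1 ≠ 0 := by linarith
    field_simp
  refine ⟨(m * (m - 1))⁻¹ • A₀, ?_, ?_, hT, hev⟩
  · intro h0
    rw [h0] at hev
    have := congrArg norm hev
    rw [norm_smul, hν1] at this
    simp at this
    exact hβ.ne (by rwa [abs_of_pos hβ] at this)
  · intro u v
    refine tendsto_nhds_unique ((aux_app hT (tendsto_const_nhds (x := u))).inner
      (tendsto_const_nhds (x := v))) (Tendsto.congr' ?_ ((tendsto_const_nhds (x := u)).inner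
      (aux_app hT (tendsto_const_nhds (x := v)))))
    filter_upwards [evI] with s hs
    rw [smul_apply, smul_apply, real_inner_smul_left,
      real_inner_smul_right, aux_symm f _ (hfan _ (hγU s hs))]
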